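/- Let α>0, 0<p<1, and let r_{n,k} be the root-cluster weights for linear preferential attachment trees with parameter α (φ(δ)=Γ(δ+1/α)/Γ(1/α)). Then for all real x with |x| < α/(1+α), Σ_{n≥1} (Σ_{j≥1} j·r_{n,j}) x^n/n! = (α/(p+α))·((1-(1+1/α)x)^{-p/(1+α)} - (1-(1+1/α)x)^{α/(1+α)}). -/

import Mathlib

open Finset Filter Asymptotics

/-- The root-cluster weight recursion. -/
noncomputable def clusterRec (p : ℝ) (φ : ℕ → ℝ) (r : ℕ → ℕ → ℝ) (b : ℕ → ℝ) : Prop :=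
  (∀ m, b m = ∑ k ∈ Finset.Icc 1 m, r m k) ∧
  ∀ n k : ℕ, 1 ≤ n → 1 ≤ k →
    r n k =
      ∑ δ ∈ Finset.range n, ∑ s ∈ (Finset.range (δ + 1)).attach,
        (δ.choose s.1 : ℝ) * (φ δ / (δ.factorial : ℝ)) *
          ∑ f ∈ (Finset.Nat.antidiagonalTuple δ (n - 1)).filter (fun f => ∀ i, 1 ≤ f i),
            (((n - 1).factorial : ℝ) / ∏ i, ((f i).factorial : ℝ)) *
              ∑ g ∈ (Finset.Nat.antidiagonalTuple s.1 (k - 1)).filter (fun g => ∀ i, 1 ≤ g i),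
                p ^ s.1 * (1 - p) ^ (δ - s.1) *
                  (∏ i : Fin s.1,
                    r (f (Fin.castLE (Nat.lt_succ_iff.mp (Finset.mem_range.mp s.2)) i)) (g i)) *
                  ∏ j ∈ Finset.univ.filter (fun j : Fin δ => s.1 ≤ (j : ℕ)), b (f j)

/-- Partial Bell polynomials. -/
noncomputable def bellPartial (k j : ℕ) (x : ℕ → ℝ) : ℝ :=
  ∑ m ∈ (Fintype.piFinset (fun _ : Fin (k - j + 1) => Finset.range (k + 1))).filter
      (fun m : Fin (k - j + 1) → ℕ => (∑ i : Fin (k - j + 1), ((i : ℕ) + 1) * m i) = k ∧ (∑ i, m i) = j),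
    (k.factorial : ℝ) *
      ∏ i : Fin (k - j + 1), x ((i : ℕ) + 1) ^ m i /
        (((m i).factorial : ℝ) * (((i : ℕ) + 1).factorial : ℝ) ^ m i)

/-!
Let `R`, `B`, `Φ` be the exponential generating functions of `Pₙ(v) = ∑ₖ r_{n,k} vᵏ`, `bₙ = Pₙ(1)`
and `φ`. The recursion says `R' = v Φ(p R + (1 - p) B)`. Substituting `v = 1 + ε` over the dual
numbers separates it into `B' = Φ(B)` and, for the generating function `M` of the first moments
`Pₙ'(1)`, `M' = Φ(B) + p Φ'(B) M`.

For linear preferential attachment `φ(δ)` is the rising factorial of `β = 1 / α`, so that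
`(1 - X) Φ' = β Φ`. Hence `(1 - B) / Φ(B)` has the constant derivative `-c` with `c = 1 + β`, and
the system becomes linear: `(1 - c X) B' = 1 - B` and `(1 - c X) M' = 1 - B + p β M`. Both `1 - B`
and `M + α / (p + α) (1 - B)` then solve `(1 - c X) Y' = -c a Y`, with `a = α / (1 + α)` and
`a = -p / (1 + α)` respectively, and the solutions of this equation are the multiples of
`(1 - c X) ^ a`.
-/

section FinProducts

variable {M : Type*} [CommMonoid M]

theorem prod_ite_val_lt {m n : ℕ} (h : m ≤ n) (f g : Fin n → M) :
    ∏ j : Fin n, (if (j : ℕ) < m then f j else g j) =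
      (∏ i : Fin m, f (Fin.castLE h i)) * ∏ j with m ≤ (j : Fin n).val, g j := by
  have hmap : (univ.filter fun j : Fin n => (j : ℕ) < m) = univ.map (Fin.castLEEmb h) := by
    ext j
    simp only [mem_filter, mem_univ, true_and, Finset.mem_map, Fin.coe_castLEEmb]
    exact ⟨fun hj => ⟨⟨j, hj⟩, rfl⟩, by rintro ⟨i, rfl⟩; exact i.isLt⟩
  simp only [prod_ite, not_lt, hmap, prod_map, Fin.coe_castLEEmb]

theorem card_filter_le_val {m n : ℕ} (h : m ≤ n) : #{j : Fin n | m ≤ (j : ℕ)} = n - m := by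
  have hadd := card_filter_add_card_filter_not (s := univ) fun j : Fin n => (j : ℕ) < m
  simp only [Fin.card_filter_val_lt, not_lt, card_univ, Fintype.card_fin] at hadd
  omega

theorem prod_ite_val_lt_const {m n : ℕ} (h : m ≤ n) (x y : M) :
    ∏ j : Fin n, (if (j : ℕ) < m then x else y) = x ^ m * y ^ (n - m) := by
  simp only [prod_ite_val_lt h, prod_const, card_univ, Fintype.card_fin, card_filter_le_val h]

end FinProducts

section PowerSeries

open PowerSeries Polynomial

variable {R S T : Type*} [CommRing R] [CommRing S] [CommRing T]

theorem powerSeries_coeff_prod_fin {m : ℕ} (f : Fin m → R⟦X⟧) (n : ℕ) :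
    coeff n (∏ i, f i) = ∑ l ∈ Finset.Nat.antidiagonalTuple m n, ∏ i, coeff (l i) (f i) := by
  rw [PowerSeries.coeff_prod]
  exact sum_nbij' (fun l => ⇑l) Finsupp.equivFunOnFinite.symm
    (by simp [mem_finsuppAntidiag, Finset.Nat.mem_antidiagonalTuple])
    (by simp [mem_finsuppAntidiag, Finset.Nat.mem_antidiagonalTuple])
    (by simp) (by simp) (by simp)

theorem polynomial_coeff_prod_fin {m : ℕ} (f : Fin m → R[X]) (n : ℕ) :
    (∏ i, f i).coeff n = ∑ l ∈ Finset.Nat.antidiagonalTuple m n, ∏ i, (f i).coeff (l i) := by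
  rw [← Polynomial.coeff_coe, ← coeToPowerSeries.ringHom_apply, map_prod,
    powerSeries_coeff_prod_fin]
  simp only [coeToPowerSeries.ringHom_apply, Polynomial.coeff_coe]

theorem powerSeries_constantCoeff_map (ψ : R →+* S) (f : R⟦X⟧) :
    constantCoeff (PowerSeries.map ψ f) = ψ (constantCoeff f) := by
  simp only [← coeff_zero_eq_constantCoeff_apply, PowerSeries.coeff_map]

theorem map_derivative (ψ : R →+* S) (f : R⟦X⟧) :
    PowerSeries.map ψ (d⁄dX R f) = d⁄dX S (PowerSeries.map ψ f) := by
  ext n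
  simp only [PowerSeries.coeff_map, PowerSeries.coeff_derivative, map_mul,
    map_add, map_natCast, map_one]

variable [Algebra R S] [Algebra R T]

theorem coeff_subst_eq_sum_range {a : S⟦X⟧} (ha : constantCoeff a = 0) (f : R⟦X⟧)
    {n N : ℕ} (h : n < N) :
    coeff n (f.subst a) = ∑ d ∈ range N, coeff d f • coeff n (a ^ d) := by
  rw [coeff_subst' (.of_constantCoeff_zero' ha), finsum_eq_sum_of_support_subset]
  intro d hd
  by_contra hdN
  have hNd : N ≤ d := by simpa using hdN
  have hpow : coeff n (a ^ d) = 0 := coeff_of_lt_order _ <|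
    (Nat.cast_lt.2 (h.trans_le hNd)).trans_le (le_order_pow_of_constantCoeff_eq_zero d ha)
  exact hd (by simp only [hpow, smul_zero])

theorem constantCoeff_subst_of_constantCoeff_eq_zero {a : S⟦X⟧} (ha : constantCoeff a = 0)
    (f : R⟦X⟧) : constantCoeff (f.subst a) = algebraMap R S (constantCoeff f) := by
  rw [← coeff_zero_eq_constantCoeff_apply, coeff_subst_eq_sum_range ha f Nat.one_pos,
    sum_range_one, pow_zero, coeff_zero_one, coeff_zero_eq_constantCoeff_apply,
    Algebra.algebraMap_eq_smul_one]

theorem coeff_subst_eq_coeff_aeval_trunc {a : S⟦X⟧} (ha : constantCoeff a = 0) (f : R⟦X⟧)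
    {n N : ℕ} (h : n < N) : coeff n (f.subst a) = coeff n (aeval a (trunc N f)) := by
  simp only [coeff_subst_eq_sum_range ha f h, aeval_def, eval₂_trunc_eq_sum_range, map_sum,
    ← Algebra.smul_def, PowerSeries.coeff_smul]

theorem map_algHom_subst {a : S⟦X⟧} (ha : constantCoeff a = 0) (f : R⟦X⟧) (ψ : S →ₐ[R] T) :
    PowerSeries.map (ψ : S →+* T) (f.subst a) = f.subst (PowerSeries.map (ψ : S →+* T) a) := by
  have hψa : constantCoeff (PowerSeries.map (ψ : S →+* T) a) = 0 := by
    rw [powerSeries_constantCoeff_map, ha, map_zero]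
  ext n
  simp only [PowerSeries.coeff_map, coeff_subst_eq_sum_range ha f n.lt_succ_self,
    coeff_subst_eq_sum_range hψa f n.lt_succ_self, map_sum, ← map_pow, AlgHom.coe_toRingHom,
    map_smul]

theorem subst_add_of_sq_eq_zero {a ε : S⟦X⟧} (ha : constantCoeff a = 0)
    (hε : constantCoeff ε = 0) (hsq : ε ^ 2 = 0) (f : R⟦X⟧) :
    f.subst (a + ε) = f.subst a + (d⁄dX R f).subst a * ε := by
  ext n
  have haε : constantCoeff (a + ε) = 0 := by rw [map_add, ha, hε, add_zero]
  rw [coeff_subst_eq_coeff_aeval_trunc haε f (by omega : n < n + 2),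
    aeval_add_of_sq_eq_zero _ _ _ hsq, ← trunc_derivative, map_add, map_add,
    coeff_subst_eq_coeff_aeval_trunc ha f (by omega : n < n + 2), PowerSeries.coeff_mul,
    PowerSeries.coeff_mul]
  congr 1
  refine sum_congr rfl fun ij hij => ?_
  rw [coeff_subst_eq_coeff_aeval_trunc ha _ (Finset.Nat.antidiagonal.fst_lt hij)]

end PowerSeries

section Egf

open scoped PowerSeries

/-- The exponential generating function `∑ aₙ Xⁿ / n!` of a sequence in a real algebra. -/
noncomputable def egf {A : Type*} [CommRing A] [Algebra ℝ A] (a : ℕ → A) : A⟦X⟧ :=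
  PowerSeries.mk fun n => (n.factorial : ℝ)⁻¹ • a n

variable {A : Type*} [CommRing A] [Algebra ℝ A]

theorem coeff_egf (a : ℕ → A) (n : ℕ) : PowerSeries.coeff n (egf a) = (n.factorial : ℝ)⁻¹ • a n :=
  PowerSeries.coeff_mk n _

theorem constantCoeff_egf (a : ℕ → A) : PowerSeries.constantCoeff (egf a) = a 0 := by
  rw [← PowerSeries.coeff_zero_eq_constantCoeff_apply, coeff_egf, Nat.factorial_zero,
    Nat.cast_one, inv_one, one_smul]

theorem derivative_egf (a : ℕ → A) : d⁄dX A (egf a) = egf fun n => a (n + 1) := by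
  ext n
  have hn : ((n + 1 : ℕ) : ℝ) ≠ 0 := Nat.cast_ne_zero.2 n.succ_ne_zero
  rw [PowerSeries.coeff_derivative, coeff_egf, coeff_egf, ← Nat.cast_succ, mul_comm,
    ← nsmul_eq_mul, ← Nat.cast_smul_eq_nsmul ℝ, smul_smul, Nat.factorial_succ, Nat.cast_mul,
    mul_inv, mul_inv_cancel_left₀ hn]

theorem egf_add (a a' : ℕ → A) : (egf fun n => a n + a' n) = egf a + egf a' := by
  ext1 n
  simp only [coeff_egf, map_add, smul_add]

theorem egf_smul (t : ℝ) (a : ℕ → A) : (egf fun n => t • a n) = t • egf a := by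
  ext1 n
  rw [PowerSeries.coeff_smul, coeff_egf, coeff_egf, smul_comm]

theorem factorial_smul_coeff_prod_egf {d : ℕ} (a : Fin d → ℕ → A) (n : ℕ) :
    (n.factorial : ℝ) • PowerSeries.coeff n (∏ i, egf (a i)) =
      ∑ f ∈ Finset.Nat.antidiagonalTuple d n,
        ((n.factorial : ℝ) / ∏ i, ((f i).factorial : ℝ)) • ∏ i, a i (f i) := by
  simp only [powerSeries_coeff_prod_fin, coeff_egf, prod_smul, prod_inv_distrib, smul_sum,
    smul_smul, div_eq_mul_inv]

end Egf

section Dual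

open PowerSeries DualNumber

variable {R : Type*} [CommRing R]

theorem aeval_algebraMap_add_eps (x : R) (f : Polynomial R) :
    Polynomial.aeval (algebraMap R R[ε] x + ε) f =
      algebraMap R R[ε] (f.eval x) + algebraMap R R[ε] (f.derivative.eval x) * ε := by
  rw [Polynomial.aeval_add_of_sq_eq_zero _ _ _ (by rw [sq, eps_mul_eps]),
    Polynomial.aeval_algebraMap_apply_eq_algebraMap_eval,
    Polynomial.aeval_algebraMap_apply_eq_algebraMap_eval]

/-- The power series `f + ε g` over the dual numbers, whose `ε`-part carries the derivative of
`f` in an auxiliary parameter. -/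
noncomputable def dualSeries (f g : R⟦X⟧) : R[ε]⟦X⟧ :=
  PowerSeries.map (algebraMap R R[ε]) f + PowerSeries.map (algebraMap R R[ε]) g * C ε

theorem coeff_dualSeries (f g : R⟦X⟧) (n : ℕ) :
    coeff n (dualSeries f g) =
      algebraMap R R[ε] (coeff n f) + algebraMap R R[ε] (coeff n g) * ε := by
  rw [dualSeries, map_add, coeff_mul_C, PowerSeries.coeff_map, PowerSeries.coeff_map]

theorem algebraMap_add_mul_eps_inj {x y x' y' : R} :
    algebraMap R R[ε] x + algebraMap R R[ε] y * ε =
      algebraMap R R[ε] x' + algebraMap R R[ε] y' * ε ↔ x = x' ∧ y = y' := by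
  simp [TrivSqZeroExt.ext_iff, TrivSqZeroExt.algebraMap_eq_inl]

theorem dualSeries_inj {f g f' g' : R⟦X⟧} :
    dualSeries f g = dualSeries f' g' ↔ f = f' ∧ g = g' := by
  simp only [PowerSeries.ext_iff, coeff_dualSeries, algebraMap_add_mul_eps_inj, forall_and]

theorem derivative_dualSeries (f g : R⟦X⟧) :
    d⁄dX R[ε] (dualSeries f g) = dualSeries (d⁄dX R f) (d⁄dX R g) := by
  ext1 n
  simp only [coeff_derivative, coeff_dualSeries, map_mul, map_add, map_natCast, map_one]
  ring

theorem C_one_add_eps_mul_dualSeries (f g : R⟦X⟧) :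
    C (1 + ε : R[ε]) * dualSeries f g = dualSeries f (f + g) := by
  have hε : C (ε : R[ε]) * C ε = 0 := by rw [← map_mul, eps_mul_eps, map_zero]
  simp only [dualSeries, map_add, map_one]
  linear_combination PowerSeries.map (algebraMap R R[ε]) g * hε

theorem subst_dualSeries {f g : R⟦X⟧} (hf : constantCoeff f = 0) (hg : constantCoeff g = 0)
    (φ : R⟦X⟧) :
    φ.subst (dualSeries f g) = dualSeries (φ.subst f) ((d⁄dX R φ).subst f * g) := by
  have hmap : ∀ a : R⟦X⟧, constantCoeff a = 0 →
      constantCoeff (PowerSeries.map (algebraMap R R[ε]) a) = 0 := fun a ha => by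
    rw [powerSeries_constantCoeff_map, ha, map_zero]
  have hsubst : ∀ ψ : R⟦X⟧, ψ.subst (PowerSeries.map (algebraMap R R[ε]) f) =
      PowerSeries.map (algebraMap R R[ε]) (ψ.subst f) := fun ψ =>
    (map_algHom_subst hf ψ (Algebra.ofId R R[ε])).symm
  rw [dualSeries, subst_add_of_sq_eq_zero (hmap f hf) (by rw [map_mul, hmap g hg, zero_mul])
    (by rw [mul_pow, ← map_pow C, sq ε, eps_mul_eps, map_zero, mul_zero]), hsubst, hsubst,
    ← mul_assoc, ← map_mul, dualSeries]

theorem map_aeval_egf (x : ℝ) (P : ℕ → Polynomial ℝ) :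
    PowerSeries.map ((Polynomial.aeval (algebraMap ℝ ℝ[ε] x + ε) : Polynomial ℝ →ₐ[ℝ] ℝ[ε]) :
        Polynomial ℝ →+* ℝ[ε]) (egf P) =
      dualSeries (egf fun n => (P n).eval x) (egf fun n => (P n).derivative.eval x) := by
  ext1 n
  simp only [PowerSeries.coeff_map, coeff_egf, coeff_dualSeries, AlgHom.coe_toRingHom,
    aeval_algebraMap_add_eps, Polynomial.derivative_smul, Polynomial.eval_smul, smul_eq_mul,
    map_mul]

end Dual

section LinearODE

open PowerSeries

section CommRing

variable {R : Type*} [CommRing R]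

theorem one_sub_mul_derivative_subst {β : R} {Φ B : R⟦X⟧}
    (hΦ : (1 - X) * d⁄dX R Φ = C β * Φ) (hB : constantCoeff B = 0) :
    (1 - B) * (d⁄dX R Φ).subst B = C β * Φ.subst B := by
  have hs : HasSubst B := .of_constantCoeff_zero' hB
  have hsubst := congrArg (substAlgHom (R := R) hs) hΦ
  rwa [map_mul, map_mul, map_sub, map_one, substAlgHom_X, coe_substAlgHom, subst_C] at hsubst

theorem coeff_one_sub_C_mul_X_mul_derivative (c : R) (Y : R⟦X⟧) (n : ℕ) :
    coeff n ((1 - C c * X) * d⁄dX R Y) = coeff (n + 1) Y * (n + 1) - c * n * coeff n Y := by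
  rw [sub_mul, one_mul, map_sub, mul_assoc, coeff_C_mul, coeff_derivative]
  cases n with
  | zero => simp
  | succ n =>
    rw [coeff_succ_X_mul, coeff_derivative, Nat.cast_succ]
    ring

theorem choose_succ_mul [BinomialRing R] (a : R) (n : ℕ) :
    Ring.choose a (n + 1) * (n + 1) = (a - n) * Ring.choose a n := by
  have h := Ring.choose_smul_choose a n.le_succ
  rwa [Nat.choose_succ_self_right, Nat.succ_eq_add_one, Nat.add_sub_cancel_left,
    Ring.choose_one_right, nsmul_eq_mul, Nat.cast_succ, mul_comm, mul_comm _ (a - n)] at h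

end CommRing

variable {K : Type*} [Field K] [CharZero K] {β : K} {Φ B : K⟦X⟧}

theorem one_sub_mul_subst_of_derivative_eq (hΦ0 : constantCoeff Φ = 1)
    (hΦ : (1 - X) * d⁄dX K Φ = C β * Φ) (hB0 : constantCoeff B = 0)
    (hB : d⁄dX K B = Φ.subst B) :
    (1 - C (1 + β) * X) * Φ.subst B = 1 - B := by
  have hF0 : constantCoeff (Φ.subst B : K⟦X⟧) = 1 := by
    rw [constantCoeff_subst_of_constantCoeff_eq_zero hB0, hΦ0, map_one]
  have hinv : (Φ.subst B : K⟦X⟧) * (Φ.subst B)⁻¹ = 1 :=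
    PowerSeries.mul_inv_cancel _ (by rw [hF0]; exact one_ne_zero)
  have hG := one_sub_mul_derivative_subst hΦ hB0
  have hW : (1 - B) * (Φ.subst B)⁻¹ = 1 - C (1 + β) * X := by
    apply derivative.ext
    · simp only [map_sub, Derivation.leibniz, derivative_inv', smul_eq_mul, derivative_C,
        derivative_X, derivative_one, derivative_subst (.of_constantCoeff_zero' hB0), hB, map_add,
        map_one]
      linear_combination (-(Φ.subst B)⁻¹ ^ 2 * Φ.subst B) * hG +
        (-1 - C β * (Φ.subst B * (Φ.subst B)⁻¹ + 1)) * hinv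
    · simp [hB0, hF0]
  rw [← hW, mul_assoc, mul_comm _ (Φ.subst B), hinv, mul_one]

theorem one_sub_mul_derivative_subst_of_derivative_eq (hΦ0 : constantCoeff Φ = 1)
    (hΦ : (1 - X) * d⁄dX K Φ = C β * Φ) (hB0 : constantCoeff B = 0)
    (hB : d⁄dX K B = Φ.subst B) :
    (1 - C (1 + β) * X) * (d⁄dX K Φ).subst B = C β := by
  have hF0 : (Φ.subst B : K⟦X⟧) ≠ 0 := fun h => by
    have h0 := constantCoeff_subst_of_constantCoeff_eq_zero hB0 Φ
    rw [h, hΦ0, map_zero, map_one] at h0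
    exact zero_ne_one h0
  refine mul_right_cancel₀ hF0 ?_
  linear_combination one_sub_mul_derivative_subst hΦ hB0 +
    (d⁄dX K Φ).subst B * one_sub_mul_subst_of_derivative_eq hΦ0 hΦ hB0 hB

theorem eq_C_mul_rescale_binomialSeries {c a : K} {Y : K⟦X⟧}
    (hY : (1 - C c * X) * d⁄dX K Y = -(C (c * a) * Y)) :
    Y = C (constantCoeff Y) * rescale (-c) (binomialSeries K a) := by
  ext n
  rw [coeff_C_mul, coeff_rescale, binomialSeries_coeff, smul_eq_mul, mul_one]
  induction n with
  | zero => simp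
  | succ n ih =>
    have hrec := congrArg (coeff n) hY
    rw [coeff_one_sub_C_mul_X_mul_derivative, map_neg, coeff_C_mul] at hrec
    refine mul_right_cancel₀ (Nat.cast_add_one_ne_zero n : (n : K) + 1 ≠ 0) ?_
    linear_combination hrec + c * (n - a) * ih +
      constantCoeff Y * (-c) ^ n * c * choose_succ_mul a n

theorem hasSum_coeff_rescale_binomialSeries {a c x : ℝ} (hx : |c * x| < 1) :
    HasSum (fun n => coeff n (rescale c (binomialSeries ℝ a)) * x ^ n) ((1 + c * x) ^ a) := by
  have hball : c * x ∈ Metric.eball (0 : ℝ) 1 := by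
    rwa [← ENNReal.ofReal_one, Metric.eball_ofReal, mem_ball_zero_iff, Real.norm_eq_abs]
  have hterm : ∀ n, coeff n (rescale c (binomialSeries ℝ a)) * x ^ n =
      _root_.binomialSeries ℝ a n fun _ => c * x := fun n => by
    rw [_root_.binomialSeries_apply, List.ofFn_const, List.prod_replicate, coeff_rescale,
      binomialSeries_coeff, smul_eq_mul, smul_eq_mul, mul_pow]
    ring
  simpa only [hterm, zero_add] using
    (Real.one_add_rpow_hasFPowerSeriesOnBall_zero (a := a)).hasSum hball

end LinearODE

section AscPochhammer

open PowerSeries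

theorem constantCoeff_egf_ascPochhammer_eval (β : ℝ) :
    constantCoeff (egf fun δ => (ascPochhammer ℝ δ).eval β) = 1 := by
  rw [constantCoeff_egf, ascPochhammer_zero, Polynomial.eval_one]

theorem one_sub_X_mul_derivative_egf_ascPochhammer_eval (β : ℝ) :
    (1 - X) * d⁄dX ℝ (egf fun δ => (ascPochhammer ℝ δ).eval β) =
      C β * egf fun δ => (ascPochhammer ℝ δ).eval β := by
  ext1 n
  have hsucc : coeff (n + 1) (egf fun δ => (ascPochhammer ℝ δ).eval β) * (n + 1) =
      (n.factorial : ℝ)⁻¹ * ((ascPochhammer ℝ n).eval β * (β + n)) := by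
    rw [← coeff_derivative, derivative_egf, coeff_egf, ascPochhammer_succ_eval, smul_eq_mul]
  have hX : (1 - X : ℝ⟦X⟧) = 1 - C 1 * X := by rw [map_one, one_mul]
  rw [hX, coeff_one_sub_C_mul_X_mul_derivative, hsucc, coeff_C_mul, coeff_egf, smul_eq_mul]
  ring

theorem gamma_add_natCast_div_gamma {z : ℝ} (hz : 0 < z) (n : ℕ) :
    Real.Gamma (n + z) / Real.Gamma z = (ascPochhammer ℝ n).eval z := by
  induction n with
  | zero =>
    rw [Nat.cast_zero, zero_add, ascPochhammer_zero, Polynomial.eval_one,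
      div_self (Real.Gamma_pos_of_pos hz).ne']
  | succ n ih =>
    have hnz : (n : ℝ) + z ≠ 0 := by positivity
    rw [ascPochhammer_succ_eval, ← ih, Nat.cast_succ, add_right_comm, Real.Gamma_add_one hnz]
    ring

end AscPochhammer

section ClusterRec

open scoped PowerSeries
open Polynomial DualNumber

/-- The polynomial `∑ₖ r_{n,k} vᵏ` recording the `n`-th row of root-cluster weights. The sum stops
at `k = n`, beyond which the weights vanish. -/
noncomputable def clusterPoly (r : ℕ → ℕ → ℝ) (n : ℕ) : ℝ[X] :=
  ∑ k ∈ Finset.Icc 1 n, monomial k (r n k)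

/-- The first moment `∑ₖ k r_{n,k}` of the `n`-th row of root-cluster weights. -/
noncomputable def clusterMoment (r : ℕ → ℕ → ℝ) (n : ℕ) : ℝ :=
  ∑ k ∈ Finset.Icc 1 n, (k : ℝ) * r n k

/-- The weight of a branch with `n` vertices at the root: it joins the root cluster with
probability `p`, and otherwise only its total weight `bₙ` counts. -/
noncomputable def branchPoly (p : ℝ) (r : ℕ → ℕ → ℝ) (b : ℕ → ℝ) (n : ℕ) : ℝ[X] :=
  p • clusterPoly r n + (1 - p) • C (b n)

theorem coeff_clusterPoly (r : ℕ → ℕ → ℝ) (n k : ℕ) :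
    (clusterPoly r n).coeff k = if k ∈ Finset.Icc 1 n then r n k else 0 := by
  simp only [clusterPoly, finsetSum_coeff, coeff_monomial, sum_ite_eq']

theorem clusterPoly_zero (r : ℕ → ℕ → ℝ) : clusterPoly r 0 = 0 := rfl

theorem constantCoeff_egf_clusterMoment (r : ℕ → ℕ → ℝ) :
    PowerSeries.constantCoeff (egf (clusterMoment r)) = 0 :=
  constantCoeff_egf _

theorem eval_one_clusterPoly (r : ℕ → ℕ → ℝ) (n : ℕ) :
    (clusterPoly r n).eval 1 = ∑ k ∈ Finset.Icc 1 n, r n k := by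
  simp only [clusterPoly, eval_finsetSum, eval_monomial, one_pow, mul_one]

theorem eval_one_derivative_clusterPoly (r : ℕ → ℕ → ℝ) (n : ℕ) :
    (derivative (clusterPoly r n)).eval 1 = clusterMoment r n := by
  simp only [clusterPoly, clusterMoment, derivative_sum, derivative_monomial, eval_finsetSum,
    eval_monomial, one_pow, mul_one, mul_comm]

theorem eval_one_derivative_branchPoly (p : ℝ) (r : ℕ → ℕ → ℝ) (b : ℕ → ℝ) (n : ℕ) :
    (derivative (branchPoly p r b n)).eval 1 = p • clusterMoment r n := by
  rw [branchPoly, derivative_add, derivative_smul, derivative_smul, derivative_C, smul_zero,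
    add_zero, eval_smul, eval_one_derivative_clusterPoly]

theorem egf_branchPoly (p : ℝ) (r : ℕ → ℕ → ℝ) (b : ℕ → ℝ) :
    egf (branchPoly p r b) = p • egf (clusterPoly r) + (1 - p) • egf fun n => C (b n) := by
  rw [← egf_smul, ← egf_smul, ← egf_add]
  rfl

namespace clusterRec

variable {p : ℝ} {φ : ℕ → ℝ} {r : ℕ → ℕ → ℝ} {b : ℕ → ℝ}

theorem eq_eval_clusterPoly (h : clusterRec p φ r b) (n : ℕ) : b n = (clusterPoly r n).eval 1 := by
  rw [h.1, eval_one_clusterPoly]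

theorem b_zero (h : clusterRec p φ r b) : b 0 = 0 := by
  rw [h.eq_eval_clusterPoly, clusterPoly_zero, eval_zero]

theorem constantCoeff_egf_branchPoly (h : clusterRec p φ r b) :
    PowerSeries.constantCoeff (egf (branchPoly p r b)) = 0 := by
  rw [constantCoeff_egf, branchPoly, clusterPoly_zero, h.b_zero, C_0, smul_zero, smul_zero,
    add_zero]

theorem eq_zero_of_lt (h : clusterRec p φ r b) {n k : ℕ} (hn : 1 ≤ n) (hk : n < k) :
    r n k = 0 := by
  induction n using Nat.strong_induction_on generalizing k with
  | _ n ih =>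
    rw [h.2 n k hn (by omega)]
    refine sum_eq_zero fun δ _ => sum_eq_zero fun s _ => mul_eq_zero_of_right _ <|
      sum_eq_zero fun f hf => mul_eq_zero_of_right _ <| sum_eq_zero fun g hg => ?_
    simp only [mem_filter, Finset.Nat.mem_antidiagonalTuple] at hf hg
    set hs := Nat.lt_succ_iff.mp (Finset.mem_range.mp s.2)
    have hle : ∑ i : Fin s.1, f (Fin.castLE hs i) ≤ n - 1 := hf.1 ▸
      (sum_map univ (Fin.castLEEmb hs) f).symm.trans_le (sum_le_sum_of_subset (subset_univ _))
    have hlt : ∑ i : Fin s.1, f (Fin.castLE hs i) < ∑ i, g i := by omega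
    obtain ⟨i, -, hi⟩ := exists_lt_of_sum_lt hlt
    have hfi : f (Fin.castLE hs i) ≤ n - 1 := by
      rw [← hf.1]
      exact single_le_sum (fun _ _ => Nat.zero_le _) (mem_univ _)
    have hri : r (f (Fin.castLE hs i)) (g i) = 0 := ih _ (by omega) (hf.2 _) hi
    rw [prod_eq_zero (mem_univ i) hri, mul_zero, zero_mul]

theorem coeff_clusterPoly_of_pos (h : clusterRec p φ r b) {n k : ℕ} (hn : 1 ≤ n) (hk : 1 ≤ k) :
    (clusterPoly r n).coeff k = r n k := by
  rw [coeff_clusterPoly, ite_eq_left_iff, mem_Icc]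
  exact fun hkn => (h.eq_zero_of_lt hn (by omega)).symm

theorem sum_prod_eq_coeff (h : clusterRec p φ r b) {s : ℕ} (f : Fin s → ℕ) (hf : ∀ i, 1 ≤ f i)
    (k : ℕ) :
    ∑ g ∈ (Finset.Nat.antidiagonalTuple s k).filter (fun g => ∀ i, 1 ≤ g i),
        ∏ i, r (f i) (g i) = (∏ i, clusterPoly r (f i)).coeff k := by
  rw [polynomial_coeff_prod_fin, sum_filter]
  refine sum_congr rfl fun g _ => ?_
  split_ifs with hg
  · exact prod_congr rfl fun i _ => (h.coeff_clusterPoly_of_pos (hf i) (hg i)).symm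
  · obtain ⟨i, hi⟩ := not_forall.1 hg
    refine (prod_eq_zero (mem_univ i) ?_).symm
    rw [coeff_clusterPoly, if_neg (by simp only [mem_Icc]; omega)]

theorem sum_antidiagonalTuple_eq_coeff (h : clusterRec p φ r b) {δ s : ℕ} (hs : s ≤ δ)
    (n k : ℕ) :
    ∑ f ∈ (Finset.Nat.antidiagonalTuple δ n).filter (fun f => ∀ i, 1 ≤ f i),
        ((n.factorial : ℝ) / ∏ i, ((f i).factorial : ℝ)) *
          ∑ g ∈ (Finset.Nat.antidiagonalTuple s k).filter (fun g => ∀ i, 1 ≤ g i),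
            p ^ s * (1 - p) ^ (δ - s) * (∏ i : Fin s, r (f (Fin.castLE hs i)) (g i)) *
              ∏ j ∈ univ.filter (fun j : Fin δ => s ≤ (j : ℕ)), b (f j) =
      (p ^ s * (1 - p) ^ (δ - s)) * ((n.factorial : ℝ) • PowerSeries.coeff n
        (egf (clusterPoly r) ^ s * egf (fun m => C (b m)) ^ (δ - s))).coeff k := by
  let u : Fin δ → ℕ → ℝ[X] := fun j => if (j : ℕ) < s then clusterPoly r else fun m => C (b m)
  have hu0 : ∀ j, u j 0 = 0 := fun j => by
    unfold u
    split_ifs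
    exacts [clusterPoly_zero r, by simp only [h.b_zero, C_0]]
  have hprod : ∀ f : Fin δ → ℕ, ∏ j, u j (f j) =
      (∏ i : Fin s, clusterPoly r (f (Fin.castLE hs i))) *
        C (∏ j ∈ univ.filter (fun j : Fin δ => s ≤ (j : ℕ)), b (f j)) := fun f => by
    simp only [u, map_prod, ← prod_ite_val_lt hs (fun j => clusterPoly r (f j)), ite_apply]
  have hpow : ∏ j, egf (u j) = egf (clusterPoly r) ^ s * egf (fun m => C (b m)) ^ (δ - s) := by
    simp only [u, apply_ite egf, prod_ite_val_lt_const hs]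
  rw [← hpow, factorial_smul_coeff_prod_egf, finsetSum_coeff, sum_filter, mul_sum]
  refine sum_congr rfl fun f _ => ?_
  split_ifs with hf
  · rw [hprod, coeff_smul, coeff_mul_C, ← h.sum_prod_eq_coeff _ (fun i => hf _), ← sum_mul,
      ← mul_sum, smul_eq_mul]
    ring
  · obtain ⟨i, hi⟩ := not_forall.1 hf
    have hui : u i (f i) = 0 := by rw [Nat.eq_zero_of_not_pos hi, hu0]
    rw [prod_eq_zero (f := fun j => u j (f j)) (mem_univ i) hui, smul_zero, coeff_zero, mul_zero]

theorem succ_succ_eq_sum (h : clusterRec p φ r b) (n k : ℕ) :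
    r (n + 1) (k + 1) = ∑ δ ∈ range (n + 1), (φ δ / (δ.factorial : ℝ)) *
      ((n.factorial : ℝ) • PowerSeries.coeff n
        (egf (branchPoly p r b) ^ δ)).coeff k := by
  rw [h.2 (n + 1) (k + 1) (by omega) (by omega)]
  refine sum_congr rfl fun δ _ => ?_
  simp only [Nat.add_sub_cancel, h.sum_antidiagonalTuple_eq_coeff]
  rw [sum_attach (range (δ + 1)) fun s => (δ.choose s : ℝ) * (φ δ / (δ.factorial : ℝ)) *
    ((p ^ s * (1 - p) ^ (δ - s)) * ((n.factorial : ℝ) • PowerSeries.coeff n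
      (egf (clusterPoly r) ^ s * egf (fun m => C (b m)) ^ (δ - s))).coeff k),
    egf_branchPoly, add_pow, map_sum, smul_sum, finsetSum_coeff, mul_sum]
  refine sum_congr rfl fun s _ => ?_
  rw [_root_.smul_pow, _root_.smul_pow, smul_mul_smul_comm, mul_comm _ (Nat.cast _),
    ← nsmul_eq_mul (α := ℝ[X]⟦X⟧), map_nsmul]
  simp only [PowerSeries.coeff_smul, coeff_smul, smul_eq_mul]
  rw [nsmul_eq_mul]
  ring

theorem clusterPoly_succ (h : clusterRec p φ r b) (n : ℕ) :
    clusterPoly r (n + 1) = X * (n.factorial : ℝ) • PowerSeries.coeff n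
      ((egf φ).subst (egf (branchPoly p r b))) := by
  ext k
  cases k with
  | zero => rw [mul_coeff_zero, coeff_X_zero, zero_mul, coeff_clusterPoly, if_neg (by simp)]
  | succ k =>
    rw [h.coeff_clusterPoly_of_pos (by omega) (by omega), h.succ_succ_eq_sum, coeff_X_mul,
      coeff_subst_eq_sum_range h.constantCoeff_egf_branchPoly _ n.lt_succ_self, smul_sum,
      finsetSum_coeff]
    refine sum_congr rfl fun δ _ => ?_
    simp only [coeff_egf, coeff_smul, smul_eq_mul]
    ring

theorem derivative_egf_clusterPoly (h : clusterRec p φ r b) :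
    d⁄dX ℝ[X] (egf (clusterPoly r)) = PowerSeries.C X *
      (egf φ).subst (egf (branchPoly p r b)) := by
  ext1 n
  have hn : (n.factorial : ℝ) ≠ 0 := Nat.cast_ne_zero.2 n.factorial_ne_zero
  rw [derivative_egf, coeff_egf, h.clusterPoly_succ, PowerSeries.coeff_C_mul, mul_smul_comm,
    inv_smul_smul₀ hn]

theorem eval_one_branchPoly (h : clusterRec p φ r b) (n : ℕ) :
    (branchPoly p r b n).eval 1 = b n := by
  rw [branchPoly, eval_add, eval_smul, eval_smul, eval_C, ← h.eq_eval_clusterPoly, smul_eq_mul,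
    smul_eq_mul]
  ring

theorem constantCoeff_egf_eq_zero (h : clusterRec p φ r b) :
    PowerSeries.constantCoeff (egf b) = 0 := by
  rw [constantCoeff_egf, h.b_zero]

theorem derivative_dualSeries_egf (h : clusterRec p φ r b) :
    d⁄dX ℝ[ε] (dualSeries (egf b) (egf (clusterMoment r))) =
      dualSeries ((egf φ).subst (egf b))
        ((egf φ).subst (egf b) + (d⁄dX ℝ (egf φ)).subst (egf b) * p • egf (clusterMoment r)) := by
  have hmap := congrArg (PowerSeries.map
    ((aeval (algebraMap ℝ ℝ[ε] 1 + ε) : ℝ[X] →ₐ[ℝ] ℝ[ε]) : ℝ[X] →+* ℝ[ε]))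
    h.derivative_egf_clusterPoly
  rw [map_derivative, map_mul, PowerSeries.map_C, map_algHom_subst h.constantCoeff_egf_branchPoly,
    map_aeval_egf, map_aeval_egf] at hmap
  simp only [h.eval_one_branchPoly, ← h.eq_eval_clusterPoly, eval_one_derivative_clusterPoly,
    eval_one_derivative_branchPoly] at hmap
  have hpM : PowerSeries.constantCoeff (p • egf (clusterMoment r)) = 0 := by
    rw [PowerSeries.constantCoeff_smul, constantCoeff_egf_clusterMoment, smul_zero]
  rwa [egf_smul, subst_dualSeries h.constantCoeff_egf_eq_zero hpM, AlgHom.coe_toRingHom, aeval_X,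
    map_one, C_one_add_eps_mul_dualSeries] at hmap

theorem derivative_egf_eq_subst (h : clusterRec p φ r b) :
    d⁄dX ℝ (egf b) = (egf φ).subst (egf b) := by
  have hdual := h.derivative_dualSeries_egf
  rw [derivative_dualSeries] at hdual
  exact (dualSeries_inj.1 hdual).1

theorem derivative_egf_clusterMoment (h : clusterRec p φ r b) :
    d⁄dX ℝ (egf (clusterMoment r)) =
      (egf φ).subst (egf b) + (d⁄dX ℝ (egf φ)).subst (egf b) * p • egf (clusterMoment r) := by
  have hdual := h.derivative_dualSeries_egf
  rw [derivative_dualSeries] at hdual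
  exact (dualSeries_inj.1 hdual).2

theorem one_sub_mul_derivative_egf {β : ℝ}
    (h : clusterRec p (fun δ => (ascPochhammer ℝ δ).eval β) r b) :
    (1 - PowerSeries.C (1 + β) * PowerSeries.X) * d⁄dX ℝ (egf b) = 1 - egf b := by
  rw [h.derivative_egf_eq_subst]
  exact one_sub_mul_subst_of_derivative_eq (constantCoeff_egf_ascPochhammer_eval β)
    (one_sub_X_mul_derivative_egf_ascPochhammer_eval β) h.constantCoeff_egf_eq_zero
    h.derivative_egf_eq_subst

theorem one_sub_mul_derivative_egf_clusterMoment {β : ℝ}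
    (h : clusterRec p (fun δ => (ascPochhammer ℝ δ).eval β) r b) :
    (1 - PowerSeries.C (1 + β) * PowerSeries.X) * d⁄dX ℝ (egf (clusterMoment r)) =
      1 - egf b + PowerSeries.C (p * β) * egf (clusterMoment r) := by
  have hΦ' := one_sub_mul_derivative_subst_of_derivative_eq
    (constantCoeff_egf_ascPochhammer_eval β) (one_sub_X_mul_derivative_egf_ascPochhammer_eval β)
    h.constantCoeff_egf_eq_zero h.derivative_egf_eq_subst
  rw [h.derivative_egf_clusterMoment, ← h.derivative_egf_eq_subst, PowerSeries.smul_eq_C_mul,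
    map_mul]
  linear_combination h.one_sub_mul_derivative_egf +
    PowerSeries.C p * egf (clusterMoment r) * hΦ'

theorem one_sub_egf_eq_rescale_binomialSeries {α : ℝ} (hα : α ≠ 0) (hα1 : 1 + α ≠ 0)
    (h : clusterRec p (fun δ => (ascPochhammer ℝ δ).eval (1 / α)) r b) :
    1 - egf b =
      PowerSeries.rescale (-(1 + 1 / α)) (PowerSeries.binomialSeries ℝ (α / (1 + α))) := by
  have hexp : (1 + 1 / α) * (α / (1 + α)) = 1 := by field_simp; ring
  have hode : (1 - PowerSeries.C (1 + 1 / α) * PowerSeries.X) * d⁄dX ℝ (1 - egf b) =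
      -(PowerSeries.C ((1 + 1 / α) * (α / (1 + α))) * (1 - egf b)) := by
    rw [hexp, map_one, map_sub, PowerSeries.derivative_one]
    linear_combination -h.one_sub_mul_derivative_egf
  have hsol := eq_C_mul_rescale_binomialSeries hode
  rwa [map_sub, map_one, h.constantCoeff_egf_eq_zero, sub_zero, map_one, one_mul] at hsol

theorem egf_clusterMoment_add_eq_rescale_binomialSeries {α : ℝ} (hα : α ≠ 0) (hα1 : 1 + α ≠ 0)
    (hpα : p + α ≠ 0) (h : clusterRec p (fun δ => (ascPochhammer ℝ δ).eval (1 / α)) r b) :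
    egf (clusterMoment r) + PowerSeries.C (α / (p + α)) * (1 - egf b) =
      PowerSeries.C (α / (p + α)) *
        PowerSeries.rescale (-(1 + 1 / α)) (PowerSeries.binomialSeries ℝ (-p / (1 + α))) := by
  have hexp : (1 + 1 / α) * (-p / (1 + α)) = -(p * (1 / α)) := by field_simp; ring
  have hcoef : (1 : ℝ) - α / (p + α) = p * (1 / α) * (α / (p + α)) := by field_simp; ring
  have hcoefC := congrArg (PowerSeries.C (R := ℝ)) hcoef
  rw [map_sub, map_mul, map_one] at hcoefC
  have hode : (1 - PowerSeries.C (1 + 1 / α) * PowerSeries.X) *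
      d⁄dX ℝ (egf (clusterMoment r) + PowerSeries.C (α / (p + α)) * (1 - egf b)) =
      -(PowerSeries.C ((1 + 1 / α) * (-p / (1 + α))) *
        (egf (clusterMoment r) + PowerSeries.C (α / (p + α)) * (1 - egf b))) := by
    rw [hexp, map_neg, (d⁄dX ℝ).map_add, (d⁄dX ℝ).leibniz, PowerSeries.derivative_C, map_sub,
      PowerSeries.derivative_one, smul_zero, add_zero, smul_eq_mul]
    linear_combination h.one_sub_mul_derivative_egf_clusterMoment -
      PowerSeries.C (α / (p + α)) * h.one_sub_mul_derivative_egf + (1 - egf b) * hcoefC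
  have hsol := eq_C_mul_rescale_binomialSeries hode
  rwa [map_add, map_mul, map_sub, map_one, constantCoeff_egf_clusterMoment,
    h.constantCoeff_egf_eq_zero, PowerSeries.constantCoeff_C, sub_zero, mul_one, zero_add] at hsol

theorem egf_clusterMoment_eq {α : ℝ} (hα : α ≠ 0) (hα1 : 1 + α ≠ 0) (hpα : p + α ≠ 0)
    (h : clusterRec p (fun δ => (ascPochhammer ℝ δ).eval (1 / α)) r b) :
    egf (clusterMoment r) = PowerSeries.C (α / (p + α)) *
      (PowerSeries.rescale (-(1 + 1 / α)) (PowerSeries.binomialSeries ℝ (-p / (1 + α))) -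
        PowerSeries.rescale (-(1 + 1 / α)) (PowerSeries.binomialSeries ℝ (α / (1 + α)))) := by
  rw [← h.one_sub_egf_eq_rescale_binomialSeries hα hα1, mul_sub,
    ← h.egf_clusterMoment_add_eq_rescale_binomialSeries hα hα1 hpα, add_sub_cancel_right]

end clusterRec

end ClusterRec

theorem stmt4_general {α p : ℝ} (hα : α ≠ 0) (hα1 : 1 + α ≠ 0) (hpα : p + α ≠ 0)
    {r : ℕ → ℕ → ℝ} {b : ℕ → ℝ}
    (hrec : clusterRec p (fun δ => (ascPochhammer ℝ δ).eval (1 / α)) r b)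
    {x : ℝ} (hx : |(1 + 1 / α) * x| < 1) :
    HasSum (fun n : ℕ => (∑ j ∈ Finset.Icc 1 n, (j : ℝ) * r n j) * x ^ n / (n.factorial : ℝ))
      ((α / (p + α)) *
        ((1 - (1 + 1 / α) * x) ^ (-p / (1 + α)) - (1 - (1 + 1 / α) * x) ^ (α / (1 + α)))) := by
  have hx' : |-(1 + 1 / α) * x| < 1 := by rwa [neg_mul, abs_neg]
  have hsum := ((hasSum_coeff_rescale_binomialSeries (a := -p / (1 + α)) hx').sub
    (hasSum_coeff_rescale_binomialSeries (a := α / (1 + α)) hx')).mul_left (α / (p + α))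
  simp only [neg_mul, ← sub_eq_add_neg] at hsum
  refine hsum.congr_fun fun n => ?_
  have hcoeff := congrArg (PowerSeries.coeff n) (hrec.egf_clusterMoment_eq hα hα1 hpα)
  rw [coeff_egf, PowerSeries.coeff_C_mul, map_sub, smul_eq_mul, clusterMoment] at hcoeff
  linear_combination x ^ n * hcoeff

theorem abs_one_add_one_div_mul_lt_one {α x : ℝ} (hα : 0 < α) (hx : |x| < α / (1 + α)) :
    |(1 + 1 / α) * x| < 1 := by
  rw [abs_mul, abs_of_pos (by positivity : 0 < 1 + 1 / α)]
  calc (1 + 1 / α) * |x| < (1 + 1 / α) * (α / (1 + α)) := by gcongr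
    _ = 1 := by field_simp; ring

/-- for linear preferential attachment trees with parameter `α > 0`,
closed form for the EGF of the first moments of the root-cluster weights. -/
theorem stmt4 (α p : ℝ) (hα : 0 < α) (hp0 : 0 < p) (hp1 : p < 1)
    (r : ℕ → ℕ → ℝ) (b : ℕ → ℝ)
    (hrec : clusterRec p (fun δ => Real.Gamma ((δ : ℝ) + 1 / α) / Real.Gamma (1 / α)) r b) :
    ∀ x : ℝ, |x| < α / (1 + α) →
      ∑' n : ℕ, (∑ j ∈ Finset.Icc 1 n, (j : ℝ) * r n j) * x ^ n / (n.factorial : ℝ)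
        = (α / (p + α)) *
            ((1 - (1 + 1 / α) * x) ^ (-p / (1 + α)) - (1 - (1 + 1 / α) * x) ^ (α / (1 + α))) := by
  simp only [gamma_add_natCast_div_gamma (one_div_pos.2 hα)] at hrec
  exact fun x hx => (stmt4_general hα.ne' (by positivity) (by positivity) hrec
    (abs_one_add_one_div_mul_lt_one hα hx)).tsum_eq
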